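/- Let Ω ⊂ ℝⁿ be a bounded domain with C^{1,1} boundary, and φ ∈ H²(Ω) ∩ H₀¹(Ω) with φ ≠ 0 in the interior of Ω and |∇φ| ≥ m > 0 on ∂Ω. Then there exists a constant C > 0, depending only on Ω and m, such that the perimeter of the zero level set of φ satisfies ∫_Ω δ(φ)|∇φ| dx ≤ C ∫_Ω |Δφ|² dx. -/

import Mathlib

open MeasureTheory

noncomputable def laplacian {n : ℕ} (f : EuclideanSpace ℝ (Fin n) → ℝ)
    (x : EuclideanSpace ℝ (Fin n)) : ℝ :=
  ∑ i : Fin n,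
    iteratedFDeriv ℝ 2 f x ![EuclideanSpace.single i 1, EuclideanSpace.single i 1]

open Module Topology in
theorem HasStrictFDerivAt.exists_nhds_hausdorffMeasure_zeros_lt_top
    {E : Type*} [NormedAddCommGroup E] [NormedSpace ℝ E] [FiniteDimensional ℝ E]
    [MeasurableSpace E] [BorelSpace E] {d : ℕ} (hd : finrank ℝ E = d + 1)
    {φ : E → ℝ} {L : E →L[ℝ] ℝ} {x : E} (hφ : HasStrictFDerivAt φ L x) (hL : L ≠ 0) :
    ∃ U ∈ 𝓝 x, μH[(d : ℝ)] (U ∩ {y | φ y = 0}) < ⊤ := by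
  obtain ⟨w, hw⟩ : ∃ w, L w ≠ 0 := by
    by_contra! h
    exact hL (ContinuousLinearMap.ext h)
  set v : E := (L w)⁻¹ • w
  have hv : L v = 1 := by simp [v, hw]
  have hv0 : 0 < ‖v‖ := norm_pos_iff.2 (by rintro h; simp [h] at hv)
  let π : E → L.ker := fun y => ⟨y - L y • v, by simp [hv]⟩
  have hc : 0 < (2 * ‖v‖)⁻¹ := by positivity
  obtain ⟨U, hU, happ⟩ := hφ.approximates_deriv_on_nhds (c := ⟨(2 * ‖v‖)⁻¹, hc.le⟩) (Or.inr hc)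
  set S : Set E := U ∩ Metric.ball x 1 ∩ {y | φ y = 0}
  refine ⟨U ∩ Metric.ball x 1, Filter.inter_mem hU (Metric.ball_mem_nhds x one_pos), ?_⟩
  have hdist : ∀ y ∈ S, ∀ z ∈ S, dist y z ≤ 2 * dist (π y) (π z) := by
    rintro y ⟨⟨hyU, -⟩, hy⟩ z ⟨⟨hzU, -⟩, hz⟩
    have h1 := happ y hyU z hzU
    rw [Set.mem_ofPred_eq] at hy hz
    rw [hy, hz, sub_zero, zero_sub, norm_neg] at h1
    replace h1 : ‖L (y - z)‖ ≤ (2 * ‖v‖)⁻¹ * ‖y - z‖ := h1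
    have h2 : ‖L (y - z) • v‖ ≤ ‖y - z‖ / 2 := by
      rw [norm_smul]
      calc _ ≤ (2 * ‖v‖)⁻¹ * ‖y - z‖ * ‖v‖ := by gcongr
        _ = _ := by field_simp
    have h3 : dist (π y) (π z) = ‖(y - z) - L (y - z) • v‖ := by
      rw [Subtype.dist_eq, dist_eq_norm]
      congr 1
      simp only [π, map_sub, sub_smul]
      abel
    have h4 := norm_sub_norm_le (y - z) (L (y - z) • v)
    rw [h3, dist_eq_norm]
    linarith
  have hinj : Set.InjOn π S := fun y hy z hz h => by
    have := hdist y hy z hz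
    rw [h, dist_self, mul_zero] at this
    exact dist_le_zero.1 this
  have hlip : LipschitzOnWith 2 (Function.invFunOn π S) (π '' S) := by
    refine LipschitzOnWith.of_dist_le_mul ?_
    rintro _ ⟨y, hy, rfl⟩ _ ⟨z, hz, rfl⟩
    rw [hinj.leftInvOn_invFunOn hy, hinj.leftInvOn_invFunOn hz]
    exact hdist y hy z hz
  have himg : Function.invFunOn π S '' (π '' S) = S := hinj.invFunOn_image subset_rfl
  have hker : finrank ℝ L.ker = d := by
    have h := LinearMap.finrank_range_add_finrank_ker (L : E →ₗ[ℝ] ℝ)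
    have h' : LinearMap.range (L : E →ₗ[ℝ] ℝ) = ⊤ :=
      LinearMap.range_eq_top.2 fun t => ⟨t • v, by simp [hv]⟩
    rw [h', finrank_top, finrank_self, hd] at h
    omega
  have hπ : Continuous π := by
    refine Continuous.subtype_mk ?_ _
    fun_prop
  have hK : IsCompact (π '' Metric.closedBall x 1) := (isCompact_closedBall x 1).image hπ
  have hfin : μH[(d : ℝ)] (π '' S) < ⊤ := by
    have h := hK.measure_lt_top (μ := μH[finrank ℝ L.ker])
    rw [hker] at h
    refine (measure_mono (Set.image_mono ?_)).trans_lt h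
    exact fun y hy => Metric.ball_subset_closedBall hy.1.2
  change μH[(d : ℝ)] S < ⊤
  rw [← himg]
  refine (hlip.hausdorffMeasure_image_le d.cast_nonneg).trans_lt ?_
  exact ENNReal.mul_lt_top (by simp) hfin

open Module Topology in
theorem IsCompact.hausdorffMeasure_lt_top_of_regular_zeros
    {E : Type*} [NormedAddCommGroup E] [NormedSpace ℝ E] [FiniteDimensional ℝ E]
    [MeasurableSpace E] [BorelSpace E] {d : ℕ} (hd : finrank ℝ E = d + 1)
    {φ : E → ℝ} (hφ : ContDiff ℝ 1 φ) {K : Set E} (hK : IsCompact K)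
    (h0 : ∀ x ∈ K, φ x = 0) (hreg : ∀ x ∈ K, fderiv ℝ φ x ≠ 0) :
    μH[(d : ℝ)] K < ⊤ := by
  refine hK.measure_lt_top_of_nhdsWithin fun x hx => ?_
  obtain ⟨U, hU, hfin⟩ := (hφ.contDiffAt.hasStrictFDerivAt
    one_ne_zero (x := x)).exists_nhds_hausdorffMeasure_zeros_lt_top hd (hreg x hx)
  exact ⟨U ∩ K, Filter.inter_mem (mem_nhdsWithin_of_mem_nhds hU) self_mem_nhdsWithin,
    (measure_mono (t := U ∩ {y | φ y = 0}) fun y hy => ⟨hy.1, h0 y hy.2⟩).trans_lt hfin⟩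

/-- A `C¹` monotone truncation of the sign function, vanishing on `[-ε, ε]` and equal to `±1`
outside `(-2ε, 2ε)`. -/
theorem exists_contDiff_monotone_truncation {ε : ℝ} (hε : 0 < ε) :
    ∃ g : ℝ → ℝ, ContDiff ℝ 1 g ∧ Monotone g ∧ (∀ t, |g t| ≤ 1) ∧
      (∀ t, |t| ≤ ε → g t = 0) ∧ (∀ t, 2 * ε ≤ |t| → g t ^ 2 = 1) ∧
      (∀ t, 2 * ε < |t| → deriv g t = 0) := by
  have hs := Real.smoothTransition.contDiff (n := 1)
  have key1 : ∀ t, 2 * ε ≤ t → Real.smoothTransition (t / ε - 1) = 1 := fun t ht =>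
    Real.smoothTransition.one_of_one_le (by
      have : 2 ≤ t / ε := by rwa [le_div_iff₀ hε]
      linarith)
  have key0 : ∀ t, t ≤ ε → Real.smoothTransition (t / ε - 1) = 0 := fun t ht =>
    Real.smoothTransition.zero_of_nonpos (by
      have : t / ε ≤ 1 := by rwa [div_le_one hε]
      linarith)
  let g : ℝ → ℝ := fun t => Real.smoothTransition (t / ε - 1) - Real.smoothTransition (-t / ε - 1)
  have hg1 : ∀ t, 2 * ε ≤ t → g t = 1 := fun t ht => by
    simp only [g]
    rw [key1 t ht, key0 (-t) (by linarith), sub_zero]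
  have hg2 : ∀ t, t ≤ -(2 * ε) → g t = -1 := fun t ht => by
    simp only [g]
    rw [key1 (-t) (by linarith), key0 t (by linarith), zero_sub]
  refine ⟨g, ?_, ?_, ?_, ?_, ?_, ?_⟩
  · exact (hs.comp (by fun_prop)).sub (hs.comp (by fun_prop))
  · intro a b hab
    refine sub_le_sub (Real.smoothTransition.monotone ?_) (Real.smoothTransition.monotone ?_) <;>
      gcongr
  · intro t
    rw [abs_le]
    have h1 := Real.smoothTransition.nonneg (t / ε - 1)
    have h2 := Real.smoothTransition.nonneg (-t / ε - 1)
    have h3 := Real.smoothTransition.le_one (t / ε - 1)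
    have h4 := Real.smoothTransition.le_one (-t / ε - 1)
    constructor <;> simp only [g] <;> linarith
  · intro t ht
    rw [abs_le] at ht
    simp only [g]
    rw [key0 t ht.2, key0 (-t) (by linarith), sub_zero]
  · intro t ht
    rcases le_abs.1 ht with h | h
    · simp [hg1 t h]
    · simp [hg2 t (by linarith)]
  · intro t ht
    rcases lt_abs.1 ht with h | h
    · have : g =ᶠ[nhds t] fun _ => 1 := by
        filter_upwards [lt_mem_nhds h] with s hs using hg1 s hs.le
      rw [this.deriv_eq, deriv_const]
    · have : g =ᶠ[nhds t] fun _ => -1 := by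
        filter_upwards [gt_mem_nhds (show t < -(2 * ε) by linarith)] with s hs using hg2 s hs.le
      rw [this.deriv_eq, deriv_const]

theorem norm_gradient_sq_eq_sum {n : ℕ} (φ : EuclideanSpace ℝ (Fin n) → ℝ)
    (x : EuclideanSpace ℝ (Fin n)) :
    ‖gradient φ x‖ ^ 2 = ∑ i, fderiv ℝ φ x (EuclideanSpace.single i 1) ^ 2 := by
  rw [EuclideanSpace.norm_sq_eq]
  refine Finset.sum_congr rfl fun i _ => ?_
  have h : inner ℝ (gradient φ x) (EuclideanSpace.single i 1) =
      fderiv ℝ φ x (EuclideanSpace.single i 1) := by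
    simp [gradient]
  rw [← h, EuclideanSpace.inner_single_right]
  simp

theorem abs_fderiv_single_le_norm_gradient {n : ℕ} (φ : EuclideanSpace ℝ (Fin n) → ℝ)
    (x : EuclideanSpace ℝ (Fin n)) (i : Fin n) :
    |fderiv ℝ φ x (EuclideanSpace.single i 1)| ≤ ‖gradient φ x‖ := by
  refine abs_le_of_sq_le_sq ?_ (norm_nonneg _)
  rw [norm_gradient_sq_eq_sum]
  exact Finset.single_le_sum (f := fun j => fderiv ℝ φ x (EuclideanSpace.single j 1) ^ 2)
    (fun j _ => sq_nonneg _) (Finset.mem_univ i)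

theorem neg_two_mul_le_of_abs_le {m R a b c y N : ℝ} (hm : 0 < m) (hR : 0 < R) (ha : 0 ≤ a)
    (hN : 0 ≤ N) (hc : |c| ≤ 1) (hb : |b| ≤ N) (hy : |y| ≤ R) (hmN : a ≠ 0 → m / 2 ≤ N) :
    -(2 * (c * (a * (b * y)))) ≤ 4 * R / m * (a * N ^ 2) := by
  have haN : a * m ≤ a * (2 * N) := by
    rcases eq_or_ne a 0 with h | h
    · simp [h]
    · exact mul_le_mul_of_nonneg_left (by linarith [hmN h]) ha
  calc -(2 * (c * (a * (b * y)))) ≤ |2 * (c * (a * (b * y)))| := neg_le_abs _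
    _ = 2 * (|c| * (a * (|b| * |y|))) := by simp [abs_mul, abs_of_nonneg ha]
    _ ≤ 2 * (1 * (a * (N * R))) := by gcongr
    _ = 2 * R * N / m * (a * m) := by field_simp
    _ ≤ 2 * R * N / m * (a * (2 * N)) := by gcongr
    _ = _ := by ring

theorem norm_gradient_eq_norm_fderiv {F : Type*} [NormedAddCommGroup F] [InnerProductSpace ℝ F]
    [CompleteSpace F] (φ : F → ℝ) (x : F) : ‖gradient φ x‖ = ‖fderiv ℝ φ x‖ := by
  simp [gradient]

theorem continuous_laplacian {n : ℕ} {φ : EuclideanSpace ℝ (Fin n) → ℝ} (hφ : ContDiff ℝ 2 φ) :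
    Continuous (laplacian φ) :=
  continuous_finsetSum _ fun i _ =>
    (ContinuousMultilinearMap.apply ℝ (fun _ : Fin 2 => EuclideanSpace ℝ (Fin n)) ℝ
      ![EuclideanSpace.single i 1, EuclideanSpace.single i 1]).continuous.comp
      (hφ.continuous_iteratedFDeriv (m := 2) le_rfl)

theorem integral_sum_fderiv_mul_fderiv_eq_neg_integral_mul_laplacian {n : ℕ}
    {G φ : EuclideanSpace ℝ (Fin n) → ℝ} (hG : ContDiff ℝ 1 G) (hGs : HasCompactSupport G)
    (hφ : ContDiff ℝ 2 φ) :
    ∫ x, ∑ i, fderiv ℝ G x (EuclideanSpace.single i 1) * fderiv ℝ φ x (EuclideanSpace.single i 1) =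
      -∫ x, G x * laplacian φ x := by
  have hφ1 : ContDiff ℝ 1 (fderiv ℝ φ) := hφ.fderiv_right (by norm_num)
  have hD (i : Fin n) : ContDiff ℝ 1 fun x => fderiv ℝ φ x (EuclideanSpace.single i 1) :=
    hφ1.clm_apply contDiff_const
  have hDD (i : Fin n) (x) : fderiv ℝ (fun x => fderiv ℝ φ x (EuclideanSpace.single i 1)) x
      (EuclideanSpace.single i 1) =
      iteratedFDeriv ℝ 2 φ x ![EuclideanSpace.single i 1, EuclideanSpace.single i 1] := by
    rw [iteratedFDeriv_two_apply, fderiv_clm_apply (hφ1.differentiable one_ne_zero x)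
      (differentiableAt_const _)]
    simp
  have hGd (i : Fin n) : Continuous fun x => fderiv ℝ G x (EuclideanSpace.single i 1) :=
    (hG.continuous_fderiv one_ne_zero).clm_apply continuous_const
  have hGds (i : Fin n) : HasCompactSupport fun x => fderiv ℝ G x (EuclideanSpace.single i 1) :=
    hGs.fderiv_apply ℝ _
  have hDDc (i : Fin n) : Continuous fun x => fderiv ℝ
      (fun x => fderiv ℝ φ x (EuclideanSpace.single i 1)) x (EuclideanSpace.single i 1) :=
    ((hD i).continuous_fderiv one_ne_zero).clm_apply continuous_const
  have h1 (i : Fin n) : Integrable fun x => fderiv ℝ G x (EuclideanSpace.single i 1) *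
      fderiv ℝ φ x (EuclideanSpace.single i 1) :=
    ((hGd i).mul (hD i).continuous).integrable_of_hasCompactSupport (hGds i).mul_right
  have h2 (i : Fin n) : Integrable fun x => G x * fderiv ℝ
      (fun x => fderiv ℝ φ x (EuclideanSpace.single i 1)) x (EuclideanSpace.single i 1) :=
    (hG.continuous.mul (hDDc i)).integrable_of_hasCompactSupport hGs.mul_right
  rw [integral_finsetSum _ fun i _ => h1 i]
  have h3 (i : Fin n) := integral_mul_fderiv_eq_neg_fderiv_mul_of_integrable (h1 i) (h2 i)
    ((hG.continuous.mul (hD i).continuous).integrable_of_hasCompactSupport hGs.mul_right)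
    (fun x _ => hG.differentiable one_ne_zero x) (fun x _ => (hD i).differentiable one_ne_zero x)
  simp only [laplacian, Finset.mul_sum, ← hDD]
  rw [integral_finsetSum _ fun i _ => h2 i, ← Finset.sum_neg_distrib]
  refine Finset.sum_congr rfl fun i _ => ?_
  rw [h3 i, neg_neg]

theorem integral_sq_eq_neg_integral_mul_coord {n : ℕ} {G : EuclideanSpace ℝ (Fin n) → ℝ}
    (hG : ContDiff ℝ 1 G) (hGs : HasCompactSupport G) (i : Fin n) :
    ∫ x, G x ^ 2 = -∫ x, 2 * G x * fderiv ℝ G x (EuclideanSpace.single i 1) * x i := by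
  let l : EuclideanSpace ℝ (Fin n) →L[ℝ] ℝ := EuclideanSpace.proj i
  have hl (x) : fderiv ℝ (fun x => l x) x (EuclideanSpace.single i 1) = 1 := by
    rw [l.fderiv]; simp [l]
  have hG2 : ContDiff ℝ 1 fun x => G x ^ 2 := hG.pow 2
  have hG2s : HasCompactSupport fun x => G x ^ 2 :=
    hGs.comp_left (g := fun t : ℝ => t ^ 2) (by norm_num)
  have hd (x) : fderiv ℝ (fun x => G x ^ 2) x (EuclideanSpace.single i 1) =
      2 * G x * fderiv ℝ G x (EuclideanSpace.single i 1) := by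
    rw [fderiv_fun_pow 2 (hG.differentiable one_ne_zero x)]
    simp
  have key := integral_mul_fderiv_eq_neg_fderiv_mul_of_integrable (μ := volume)
    (f := fun x => G x ^ 2) (g := fun x => l x) (v := EuclideanSpace.single i 1)
    ((((hG2.continuous_fderiv one_ne_zero).clm_apply continuous_const).mul
      l.continuous).integrable_of_hasCompactSupport (hG2s.fderiv_apply ℝ _).mul_right)
    (by simpa only [hl, mul_one] using hG2.continuous.integrable_of_hasCompactSupport hG2s)
    ((hG2.continuous.mul l.continuous).integrable_of_hasCompactSupport hG2s.mul_right)
    (fun x _ => hG2.differentiable one_ne_zero x) (fun x _ => l.differentiableAt)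
  simp only [hl, mul_one, hd] at key
  exact key

section Truncation

variable {E : Type*} {Ω : Set E} {φ : E → ℝ} {g : ℝ → ℝ}
  {ε : ℝ}

theorem indicator_comp_eventuallyEq_zero [TopologicalSpace E] (hφ : Continuous φ)
    (hbd : ∀ x ∈ frontier Ω, φ x = 0) (hε : 0 < ε) (hg0 : ∀ t, |t| ≤ ε → g t = 0)
    {x : E} (hx : x ∉ interior Ω) :
    Ω.indicator (fun y => g (φ y)) =ᶠ[nhds x] fun _ => 0 := by
  by_cases hxc : x ∈ closure Ω
  · have hx0 := hbd x ⟨hxc, hx⟩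
    have : ∀ᶠ y in nhds x, |φ y| < ε :=
      hφ.abs.continuousAt.eventually_lt_const (by simpa [hx0] using hε)
    filter_upwards [this] with y hy
    exact Set.indicator_apply_eq_zero.2 fun _ => hg0 _ hy.le
  · filter_upwards [isClosed_closure.isOpen_compl.mem_nhds hxc] with y hy
    exact Set.indicator_of_notMem (fun h => hy (subset_closure h)) _

theorem indicator_comp_eventuallyEq [TopologicalSpace E] (hΩ : IsOpen Ω) {x : E} (hx : x ∈ Ω) :
    Ω.indicator (fun y => g (φ y)) =ᶠ[nhds x] fun y => g (φ y) := by
  filter_upwards [hΩ.mem_nhds hx] with y hy using Set.indicator_of_mem hy _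

theorem contDiff_indicator_comp [NormedAddCommGroup E] [NormedSpace ℝ E] (hΩ : IsOpen Ω) (hφ : ContDiff ℝ 1 φ) (hg : ContDiff ℝ 1 g)
    (hbd : ∀ x ∈ frontier Ω, φ x = 0) (hε : 0 < ε) (hg0 : ∀ t, |t| ≤ ε → g t = 0) :
    ContDiff ℝ 1 (Ω.indicator fun y => g (φ y)) := by
  rw [contDiff_iff_contDiffAt]
  intro x
  by_cases hx : x ∈ Ω
  · exact (hg.comp hφ).contDiffAt.congr_of_eventuallyEq (indicator_comp_eventuallyEq hΩ hx)
  · exact contDiffAt_const.congr_of_eventuallyEq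
      (indicator_comp_eventuallyEq_zero hφ.continuous hbd hε hg0 (by rwa [hΩ.interior_eq]))

theorem fderiv_indicator_comp [NormedAddCommGroup E] [NormedSpace ℝ E] (hΩ : IsOpen Ω) (hφ : ContDiff ℝ 1 φ) (hg : ContDiff ℝ 1 g)
    (hbd : ∀ x ∈ frontier Ω, φ x = 0) (hε : 0 < ε) (hg0 : ∀ t, |t| ≤ ε → g t = 0) (x : E) :
    fderiv ℝ (Ω.indicator fun y => g (φ y)) x =
      Ω.indicator (fun y => deriv g (φ y) • fderiv ℝ φ y) x := by
  by_cases hx : x ∈ Ω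
  · rw [(indicator_comp_eventuallyEq hΩ hx).fderiv_eq, Set.indicator_of_mem hx]
    exact ((hg.differentiable one_ne_zero (φ x)).hasDerivAt.comp_hasFDerivAt x
      (hφ.differentiable one_ne_zero x).hasFDerivAt).fderiv
  · rw [(indicator_comp_eventuallyEq_zero hφ.continuous hbd hε hg0
      (by rwa [hΩ.interior_eq])).fderiv_eq, Set.indicator_of_notMem hx]
    simp

end Truncation

theorem IsCompact.exists_pos_forall_le_abs {X : Type*} [TopologicalSpace X] {K : Set X}
    (hK : IsCompact K) {φ : X → ℝ} (hφ : Continuous φ) (h0 : ∀ x ∈ K, φ x ≠ 0) :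
    ∃ δ > 0, ∀ x ∈ K, δ ≤ |φ x| := by
  rcases K.eq_empty_or_nonempty with rfl | hne
  · exact ⟨1, one_pos, by simp⟩
  · obtain ⟨x, hx, hmin⟩ := hK.exists_isMinOn hne hφ.abs.continuousOn
    exact ⟨|φ x|, abs_pos.2 (h0 x hx), fun y hy => hmin hy⟩

theorem volume_ball_mul_le_integral_abs_laplacian {n : ℕ} {Ω : Set (EuclideanSpace ℝ (Fin n))}
    (hΩ : IsOpen Ω) (hΩb : Bornology.IsBounded Ω) {m R r : ℝ} (hm : 0 < m) (hR : 0 < R)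
    {x₀ : EuclideanSpace ℝ (Fin n)} (hball : Metric.closedBall x₀ r ⊆ Ω) (i : Fin n)
    (hRΩ : ∀ x ∈ Ω, |x i| ≤ R) {φ : EuclideanSpace ℝ (Fin n) → ℝ} (hφ : ContDiff ℝ 2 φ)
    (hbd : ∀ x ∈ frontier Ω, φ x = 0) (hne : ∀ x ∈ Ω, φ x ≠ 0)
    (hgrad : ∀ x ∈ frontier Ω, m ≤ ‖gradient φ x‖) :
    volume.real (Metric.closedBall x₀ r) * m ≤ 4 * R * ∫ x in Ω, |laplacian φ x| := by
  have hφ1 : ContDiff ℝ 1 φ := hφ.of_le (by norm_num)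
  have hgc : Continuous fun x => ‖gradient φ x‖ := by
    simpa only [norm_gradient_eq_norm_fderiv] using (hφ1.continuous_fderiv one_ne_zero).norm
  have hΩc : IsCompact (closure Ω) := hΩb.isCompact_closure
  obtain ⟨δ, hδ, hδφ⟩ := ((hΩc.inter_right (isClosed_le hgc (continuous_const (y := m / 2)))).union
    (isCompact_closedBall x₀ r)).exists_pos_forall_le_abs hφ.continuous (by
      rintro x (⟨hxc, hxg⟩ | hx)
      · by_cases hx : x ∈ Ω
        · exact hne x hx
        · have := hgrad x ⟨hxc, by rwa [hΩ.interior_eq]⟩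
          have hxg : ‖gradient φ x‖ ≤ m / 2 := hxg
          linarith
      · exact hne x (hball hx))
  obtain ⟨g, hg, hgmono, hg1, hg0, hgsq, hgd⟩ :=
    exists_contDiff_monotone_truncation (ε := δ / 3) (by positivity)
  have hε : 0 < δ / 3 := by positivity
  set G : EuclideanSpace ℝ (Fin n) → ℝ := Ω.indicator fun y => g (φ y) with hGdef
  have hG : ContDiff ℝ 1 G := contDiff_indicator_comp hΩ hφ1 hg hbd hε hg0
  have hGd := fderiv_indicator_comp hΩ hφ1 hg hbd hε hg0
  have hGs : HasCompactSupport G := HasCompactSupport.intro hΩc fun x hx =>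
    Set.indicator_of_notMem (fun h => hx (subset_closure h)) _
  have hG1 (x) : |G x| ≤ Ω.indicator 1 x := by
    by_cases hx : x ∈ Ω
    · simpa [hGdef, hx] using hg1 (φ x)
    · simp [hGdef, hx]
  have hLint : IntegrableOn (fun x => |laplacian φ x|) Ω :=
    ((continuous_laplacian hφ).abs.continuousOn.integrableOn_compact hΩc).mono_set subset_closure
  have hP : Integrable fun x => ∑ j, fderiv ℝ G x (EuclideanSpace.single j 1) *
      fderiv ℝ φ x (EuclideanSpace.single j 1) :=
    integrable_finsetSum _ fun j _ =>
      (((hG.continuous_fderiv one_ne_zero).clm_apply continuous_const).mul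
        ((hφ1.continuous_fderiv one_ne_zero).clm_apply
          continuous_const)).integrable_of_hasCompactSupport (hGs.fderiv_apply ℝ _).mul_right
  have hG2s : HasCompactSupport fun x => G x ^ 2 :=
    hGs.comp_left (g := fun t : ℝ => t ^ 2) (by norm_num)
  have hG2 : Integrable fun x => G x ^ 2 :=
    (hG.continuous.pow 2).integrable_of_hasCompactSupport hG2s
  have hQ : Integrable fun x => 2 * G x * fderiv ℝ G x (EuclideanSpace.single i 1) * x i :=
    (((continuous_const.mul hG.continuous).mul
      ((hG.continuous_fderiv one_ne_zero).clm_apply continuous_const)).mul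
        (EuclideanSpace.proj i : EuclideanSpace ℝ (Fin n) →L[ℝ] ℝ).continuous
      ).integrable_of_hasCompactSupport (hGs.mul_left.mul_right.mul_right)
  have hpt (x) : -(2 * G x * fderiv ℝ G x (EuclideanSpace.single i 1) * x i) ≤
      4 * R / m * ∑ j, fderiv ℝ G x (EuclideanSpace.single j 1) *
        fderiv ℝ φ x (EuclideanSpace.single j 1) := by
    rw [hGd x]
    by_cases hx : x ∈ Ω
    · simp only [Set.indicator_of_mem hx, smul_apply, smul_eq_mul, mul_assoc]
      rw [← Finset.mul_sum]
      simp only [← pow_two, ← norm_gradient_sq_eq_sum]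
      refine neg_two_mul_le_of_abs_le hm hR hgmono.deriv_nonneg (norm_nonneg _)
        (by simpa [hx] using hG1 x) (abs_fderiv_single_le_norm_gradient φ x i) (hRΩ x hx)
        fun ha => ?_
      by_contra! hcon
      have h1 := hδφ x (Or.inl ⟨subset_closure hx, hcon.le⟩)
      exact ha (hgd _ (by linarith))
    · simp [Set.indicator_of_notMem hx]
  have h1 : volume.real (Metric.closedBall x₀ r) ≤ ∫ x, G x ^ 2 := by
    rw [← integral_indicator_one Metric.isClosed_closedBall.measurableSet]
    refine integral_mono ((integrable_indicator_iff
      Metric.isClosed_closedBall.measurableSet).2 ?_) hG2 fun x => ?_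
    · exact integrableOn_const (isCompact_closedBall x₀ r).measure_lt_top.ne
    · by_cases hx : x ∈ Metric.closedBall x₀ r
      · have := hδφ x (Or.inr hx)
        rw [Set.indicator_of_mem hx]
        simp only [hGdef, Set.indicator_of_mem (hball hx)]
        rw [hgsq _ (by linarith)]
        simp
      · rw [Set.indicator_of_notMem hx]
        positivity
  have h2 : ∫ x, G x ^ 2 ≤ 4 * R / m * ∫ x, ∑ j, fderiv ℝ G x (EuclideanSpace.single j 1) *
      fderiv ℝ φ x (EuclideanSpace.single j 1) := by
    rw [integral_sq_eq_neg_integral_mul_coord hG hGs i, ← integral_neg, ← integral_const_mul]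
    exact integral_mono hQ.neg (hP.const_mul _) hpt
  have h3 : -∫ x, G x * laplacian φ x ≤ ∫ x in Ω, |laplacian φ x| := by
    rw [← integral_neg, ← integral_indicator hΩ.measurableSet]
    refine integral_mono ((hG.continuous.mul
      (continuous_laplacian hφ)).integrable_of_hasCompactSupport hGs.mul_right).neg
      ((integrable_indicator_iff hΩ.measurableSet).2 hLint) fun x => ?_
    refine (neg_le_abs _).trans ?_
    rw [abs_mul]
    refine (mul_le_mul_of_nonneg_right (hG1 x) (abs_nonneg _)).trans_eq ?_
    by_cases hx : x ∈ Ω <;> simp [hx]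
  rw [integral_sum_fderiv_mul_fderiv_eq_neg_integral_mul_laplacian hG hGs hφ] at h2
  rw [← le_div_iff₀ hm]
  calc _ ≤ _ := h1.trans h2
    _ ≤ 4 * R / m * ∫ x in Ω, |laplacian φ x| := by gcongr
    _ = _ := by ring

theorem sq_integral_abs_le_measureReal_mul_integral_sq {X : Type*} [MeasurableSpace X]
    {μ : Measure X} [IsFiniteMeasure μ] {f : X → ℝ} (hf : Integrable f μ)
    (hf2 : Integrable (fun x => f x ^ 2) μ) :
    (∫ x, |f x| ∂μ) ^ 2 ≤ μ.real Set.univ * ∫ x, f x ^ 2 ∂μ := by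
  rcases eq_or_lt_of_le (measureReal_nonneg (μ := μ) (s := Set.univ)) with hA | hA
  · have : μ = 0 := by
      rw [← Measure.measure_univ_eq_zero, ← measureReal_eq_zero_iff]
      exact hA.symm
    simp [this]
  · set K := ∫ x, |f x| ∂μ
    set A := μ.real Set.univ
    have h : ∫ x, 2 * (K / A) * |f x| ∂μ ≤ ∫ x, f x ^ 2 + (K / A) ^ 2 ∂μ := by
      refine integral_mono (hf.abs.const_mul _) (hf2.add (integrable_const _)) fun x => ?_
      have := sq_nonneg (|f x| - K / A)
      have h2 := sq_abs (f x)
      simp only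
      nlinarith
    rw [integral_const_mul, integral_add hf2 (integrable_const _), integral_const, smul_eq_mul] at h
    change 2 * (K / A) * K ≤ _ + A * (K / A) ^ 2 at h
    have e : 2 * (K / A) * K = 2 * (K ^ 2 / A) := by ring
    have e2 : A * (K / A) ^ 2 = K ^ 2 / A := by field_simp
    rw [e, e2] at h
    rw [mul_comm, ← div_le_iff₀ hA]
    linarith

/-- For a bounded domain Ω with (C^{1,1}) boundary and m > 0, there is a constant C > 0,
depending only on Ω and m, such that for every φ ∈ C² vanishing on ∂Ω, nonzero in the
interior of Ω, with |∇φ| ≥ m on ∂Ω, the (n−1)-dimensional measure of the zero level set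
of φ (which, by the coarea interpretation, equals ∫_Ω δ(φ)|∇φ| dx) is bounded by
C ∫_Ω |Δφ|² dx. -/
theorem stmt_2 {n : ℕ} (Ω : Set (EuclideanSpace ℝ (Fin n)))
    (hΩopen : IsOpen Ω) (hΩbdd : Bornology.IsBounded Ω)
    (m : ℝ) (hm : 0 < m) :
    ∃ C > 0, ∀ φ : EuclideanSpace ℝ (Fin n) → ℝ, ContDiff ℝ 2 φ →
      (∀ x ∈ frontier Ω, φ x = 0) →
      (∀ x ∈ Ω, φ x ≠ 0) →
      (∀ x ∈ frontier Ω, m ≤ ‖gradient φ x‖) →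
      μH[(n : ℝ) - 1] {x ∈ closure Ω | φ x = 0} ≤
        ENNReal.ofReal (C * ∫ x in Ω, (laplacian φ x) ^ 2) := by
  have hzero {φ : EuclideanSpace ℝ (Fin n) → ℝ} (hne : ∀ x ∈ Ω, φ x ≠ 0) :
      {x ∈ closure Ω | φ x = 0} ⊆ frontier Ω := fun x hx =>
    ⟨hx.1, fun h => hne x (interior_subset h) hx.2⟩
  by_cases hfr : frontier Ω = ∅
  · refine ⟨1, one_pos, fun φ _ _ hne _ => ?_⟩
    rw [Set.subset_eq_empty (hzero hne) hfr]
    simp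
  by_cases hex : ∃ φ : EuclideanSpace ℝ (Fin n) → ℝ, ContDiff ℝ 2 φ ∧
      (∀ x ∈ frontier Ω, φ x = 0) ∧ ∀ x ∈ frontier Ω, m ≤ ‖gradient φ x‖
  swap
  · exact ⟨1, one_pos, fun φ hφ hbd _ hgrad => (hex ⟨φ, hφ, hbd, hgrad⟩).elim⟩
  obtain ⟨φ₀, hφ₀, hbd₀, hgrad₀⟩ := hex
  obtain ⟨x₀, hx₀⟩ : Ω.Nonempty := by
    by_contra! h
    simp [h] at hfr
  obtain ⟨d, rfl⟩ : ∃ d, n = d + 1 := by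
    refine Nat.exists_eq_succ_of_ne_zero ?_
    rintro rfl
    exact hfr (by rw [Set.Nonempty.eq_univ ⟨x₀, hx₀⟩, frontier_univ])
  have hfin : μH[(d : ℝ)] (frontier Ω) < ⊤ := by
    refine (hΩbdd.isCompact_closure.of_isClosed_subset isClosed_frontier
      frontier_subset_closure).hausdorffMeasure_lt_top_of_regular_zeros (by simp)
      (hφ₀.of_le (by norm_num)) hbd₀ fun x hx h => ?_
    have := hgrad₀ x hx
    rw [norm_gradient_eq_norm_fderiv, h, norm_zero] at this
    linarith
  obtain ⟨r, hr, hball⟩ := Metric.nhds_basis_closedBall.mem_iff.1 (hΩopen.mem_nhds hx₀)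
  obtain ⟨R, hR, hRΩ⟩ := hΩbdd.exists_pos_norm_le
  have hV : 0 < volume.real (Metric.closedBall x₀ r) :=
    ENNReal.toReal_pos (Metric.measure_closedBall_pos _ _ hr).ne'
      (isCompact_closedBall x₀ r).measure_lt_top.ne
  have hΩfin : volume Ω < ⊤ := hΩbdd.measure_lt_top
  have hA : 0 < volume.real Ω := hV.trans_le (measureReal_mono hball hΩfin.ne)
  set V := volume.real (Metric.closedBall x₀ r)
  set A := volume.real Ω
  set H := (μH[(d : ℝ)] (frontier Ω)).toReal
  have hH : 0 ≤ H := ENNReal.toReal_nonneg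
  set c := (V * m / (4 * R)) ^ 2 / A
  have hc : 0 < c := by positivity
  refine ⟨(H + 1) / c, by positivity, fun φ hφ hbd hne hgrad => ?_⟩
  have hL := continuous_laplacian hφ
  have hK := volume_ball_mul_le_integral_abs_laplacian hΩopen hΩbdd hm hR hball 0
    (fun x hx => (PiLp.norm_apply_le x 0).trans (hRΩ x hx)) hφ hbd hne hgrad
  have : IsFiniteMeasure (volume.restrict Ω) := ⟨by simpa using hΩfin⟩
  have hCS := sq_integral_abs_le_measureReal_mul_integral_sq (μ := volume.restrict Ω)
    ((hL.continuousOn.integrableOn_compact hΩbdd.isCompact_closure).mono_set subset_closure)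
    (((hL.pow 2).continuousOn.integrableOn_compact
      hΩbdd.isCompact_closure).mono_set subset_closure)
  rw [measureReal_restrict_apply_univ] at hCS
  have hcI : c ≤ ∫ x in Ω, laplacian φ x ^ 2 := by
    rw [div_le_iff₀' hA]
    refine le_trans ?_ hCS
    gcongr
    rw [div_le_iff₀' (by positivity)]
    exact hK
  have hd : ((d + 1 : ℕ) : ℝ) - 1 = d := by push_cast; ring
  rw [hd]
  refine (measure_mono (hzero hne)).trans ?_
  rw [← ENNReal.ofReal_toReal hfin.ne]
  refine ENNReal.ofReal_le_ofReal ?_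
  calc H ≤ (H + 1) / c * c := by rw [div_mul_cancel₀ _ hc.ne']; linarith
    _ ≤ _ := by gcongr
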